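/- arXiv:2008.13562 — 11 statements merged into one kernel-verified Lean document; each statement's English description precedes it below -/
import Mathlib

section
/- Let L be a commutative integral residuated lattice. Then the K-expansion K(L) is a commutative residuated lattice. Explicitly: the twist order (a,b) ≤ (c,d) iff a ≤ c and d ≤ b makes L × L a lattice whose join and meet are the K-expansion join and meet; the K-expansion product is associative and commutative with unit (1,1); and residuation holds: for all pairs X, Y, Z in L × L, X·Y ≤ Z if and only if X ≤ Y ⇨ Z. -/
/-- A commutative integral residuated lattice. -/
class CIRL (L : Type*) extends Lattice L, CommMonoid L where
  imp : L → L → L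
  resid : ∀ a b c : L, a * b ≤ c ↔ a ≤ imp b c
  le_one : ∀ a : L, a ≤ (1 : L)

namespace CIRL

variable {L : Type*} [CIRL L]

/-- The twist order on `K(L)`. -/
def kle (X Y : L × L) : Prop := X.1 ≤ Y.1 ∧ Y.2 ≤ X.2

/-- Join in `K(L)`. -/
def kjoin (X Y : L × L) : L × L := (X.1 ⊔ Y.1, X.2 ⊓ Y.2)

/-- Meet in `K(L)`. -/
def kmeet (X Y : L × L) : L × L := (X.1 ⊓ Y.1, X.2 ⊔ Y.2)

/-- Product in `K(L)`. -/
def kmul (X Y : L × L) : L × L := (X.1 * Y.1, imp X.1 Y.2 ⊓ imp Y.1 X.2)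

/-- Implication in `K(L)`. -/
def kimp (X Y : L × L) : L × L := (imp X.1 Y.1 ⊓ imp Y.2 X.2, X.1 * Y.2)

/-- The unit of `K(L)`. -/
def kone : L × L := ((1 : L), (1 : L))

end CIRL

open CIRL

/-!
Residuation says that `imp a` is right adjoint to multiplication by `a`; hence it preserves
meets and satisfies the currying law `imp (a * b) c = imp a (imp b c)`. These two laws turn the
second component of either bracketing of a triple product in `K(L)` into the meet of
`imp X.1 (imp Y.1 Z.2)`, `imp Z.1 (imp X.1 Y.2)` and `imp Y.1 (imp Z.1 X.2)`, which gives
associativity. Integrality yields `imp a 1 = 1`, which makes `(1, 1)` the unit. The twist order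
is the product order on `L × Lᵒᵈ`.
-/

namespace CIRL

variable {L : Type*} [CIRL L]

theorem le_imp_comm {a b c : L} : a ≤ imp b c ↔ b ≤ imp a c := by
  rw [← resid, mul_comm, resid]

theorem mul_imp (a b c : L) : imp (a * b) c = imp a (imp b c) :=
  eq_of_forall_le_iff fun t => by rw [← resid, ← resid, ← resid, mul_assoc]

theorem imp_left_comm (a b c : L) : imp a (imp b c) = imp b (imp a c) := by
  rw [← mul_imp, mul_comm, mul_imp]

theorem imp_inf_distrib (a b c : L) : imp a (b ⊓ c) = imp a b ⊓ imp a c :=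
  eq_of_forall_le_iff fun t => by simp only [le_inf_iff, ← resid]

theorem one_imp (a : L) : imp 1 a = a :=
  eq_of_forall_le_iff fun t => by rw [← resid, mul_one]

theorem imp_one (a : L) : imp a 1 = 1 :=
  le_antisymm (le_one _) ((resid _ _ _).1 (le_one _))

theorem kle_refl (X : L × L) : kle X X :=
  ⟨le_rfl, le_rfl⟩

theorem kle_antisymm {X Y : L × L} (hXY : kle X Y) (hYX : kle Y X) : X = Y :=
  Prod.ext (hXY.1.antisymm hYX.1) (hYX.2.antisymm hXY.2)

theorem kle_trans {X Y Z : L × L} (hXY : kle X Y) (hYZ : kle Y Z) : kle X Z :=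
  ⟨hXY.1.trans hYZ.1, hYZ.2.trans hXY.2⟩

theorem kle_kjoin_left (X Y : L × L) : kle X (kjoin X Y) :=
  ⟨le_sup_left, inf_le_left⟩

theorem kle_kjoin_right (X Y : L × L) : kle Y (kjoin X Y) :=
  ⟨le_sup_right, inf_le_right⟩

theorem kjoin_kle {X Y Z : L × L} (hX : kle X Z) (hY : kle Y Z) : kle (kjoin X Y) Z :=
  ⟨sup_le hX.1 hY.1, le_inf hX.2 hY.2⟩

theorem kmeet_kle_left (X Y : L × L) : kle (kmeet X Y) X :=
  ⟨inf_le_left, le_sup_left⟩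

theorem kmeet_kle_right (X Y : L × L) : kle (kmeet X Y) Y :=
  ⟨inf_le_right, le_sup_right⟩

theorem kle_kmeet {X Y Z : L × L} (hX : kle Z X) (hY : kle Z Y) : kle Z (kmeet X Y) :=
  ⟨le_inf hX.1 hY.1, sup_le hX.2 hY.2⟩

theorem kmul_comm (X Y : L × L) : kmul X Y = kmul Y X :=
  Prod.ext (mul_comm _ _) (inf_comm _ _)

theorem kmul_assoc (X Y Z : L × L) : kmul (kmul X Y) Z = kmul X (kmul Y Z) := by
  refine Prod.ext (mul_assoc _ _ _) ?_
  calc imp (X.1 * Y.1) Z.2 ⊓ imp Z.1 (imp X.1 Y.2 ⊓ imp Y.1 X.2)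
      = imp X.1 (imp Y.1 Z.2) ⊓ (imp Z.1 (imp X.1 Y.2) ⊓ imp Z.1 (imp Y.1 X.2)) := by
        rw [mul_imp, imp_inf_distrib]
    _ = imp X.1 (imp Y.1 Z.2) ⊓ imp X.1 (imp Z.1 Y.2) ⊓ imp Y.1 (imp Z.1 X.2) := by
        rw [imp_left_comm Z.1 X.1, imp_left_comm Z.1 Y.1, inf_assoc]
    _ = imp X.1 (imp Y.1 Z.2 ⊓ imp Z.1 Y.2) ⊓ imp (Y.1 * Z.1) X.2 := by
        rw [imp_inf_distrib, mul_imp]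

theorem kmul_kone (X : L × L) : kmul X kone = X := by
  refine Prod.ext (mul_one _) ?_
  calc imp X.1 1 ⊓ imp 1 X.2 = 1 ⊓ X.2 := by rw [imp_one, one_imp]
    _ = X.2 := inf_eq_right.2 (le_one _)

theorem kmul_kle_iff_kle_kimp (X Y Z : L × L) : kle (kmul X Y) Z ↔ kle X (kimp Y Z) :=
  calc X.1 * Y.1 ≤ Z.1 ∧ Z.2 ≤ imp X.1 Y.2 ⊓ imp Y.1 X.2
      ↔ X.1 * Y.1 ≤ Z.1 ∧ Z.2 ≤ imp X.1 Y.2 ∧ Z.2 ≤ imp Y.1 X.2 := by rw [le_inf_iff]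
    _ ↔ X.1 ≤ imp Y.1 Z.1 ∧ X.1 ≤ imp Z.2 Y.2 ∧ Y.1 * Z.2 ≤ X.2 :=
        and_congr (resid _ _ _) (and_congr le_imp_comm (le_imp_comm.trans (resid _ _ _).symm))
    _ ↔ X.1 ≤ imp Y.1 Z.1 ⊓ imp Z.2 Y.2 ∧ Y.1 * Z.2 ≤ X.2 := by rw [le_inf_iff, and_assoc]

end CIRL

/-- The K-expansion `K(L)` of a CIRL `L` is a commutative residuated lattice:
the twist order is a partial order in which `kjoin` is the least upper bound and
`kmeet` the greatest lower bound, `kmul` is associative and commutative with unit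
`kone`, and `(kmul, kimp)` form a residuated pair. -/
theorem stmt0 {L : Type*} [CIRL L] :
    (∀ X : L × L, kle X X) ∧
    (∀ X Y : L × L, kle X Y → kle Y X → X = Y) ∧
    (∀ X Y Z : L × L, kle X Y → kle Y Z → kle X Z) ∧
    (∀ X Y : L × L, kle X (kjoin X Y) ∧ kle Y (kjoin X Y) ∧
      ∀ Z : L × L, kle X Z → kle Y Z → kle (kjoin X Y) Z) ∧
    (∀ X Y : L × L, kle (kmeet X Y) X ∧ kle (kmeet X Y) Y ∧
      ∀ Z : L × L, kle Z X → kle Z Y → kle Z (kmeet X Y)) ∧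
    (∀ X Y Z : L × L, kmul (kmul X Y) Z = kmul X (kmul Y Z)) ∧
    (∀ X Y : L × L, kmul X Y = kmul Y X) ∧
    (∀ X : L × L, kmul X kone = X) ∧
    (∀ X Y Z : L × L, kle (kmul X Y) Z ↔ kle X (kimp Y Z)) :=
  ⟨kle_refl, fun _ _ => kle_antisymm, fun _ _ _ => kle_trans,
    fun X Y => ⟨kle_kjoin_left X Y, kle_kjoin_right X Y, fun _ => kjoin_kle⟩,
    fun X Y => ⟨kmeet_kle_left X Y, kmeet_kle_right X Y, fun _ => kle_kmeet⟩,
    kmul_assoc, kmul_comm, kmul_kone, kmul_kle_iff_kle_kimp⟩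
end

section
/- Let L be a commutative integral residuated lattice. Then K(L) is 1-involutive: for all (a,b) ∈ L × L, (a,b) ⇨ (1,1) = (b,a), and consequently ((a,b) ⇨ (1,1)) ⇨ (1,1) = (a,b). -/
open CIRL

namespace CIRL

variable {L : Type*} [CIRL L]

theorem imp_eq_one_iff_le {a b : L} : imp a b = 1 ↔ a ≤ b :=
  calc imp a b = 1
    _ ↔ 1 ≤ imp a b := ⟨ge_of_eq, (le_one _).antisymm⟩
    _ ↔ a ≤ b := by rw [← resid, one_mul]

theorem one_inf (a : L) : 1 ⊓ a = a :=
  inf_eq_right.2 (le_one a)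

theorem kimp_kone (X : L × L) : kimp X kone = X.swap :=
  calc kimp X kone
    _ = (imp X.1 1 ⊓ imp 1 X.2, X.1 * 1) := rfl
    _ = (X.2, X.1) := by rw [imp_one, one_imp, one_inf, mul_one]

theorem kimp_kone_involutive : Function.Involutive fun X : L × L => kimp X kone := fun X => by
  simp only [kimp_kone, Prod.swap_swap]

end CIRL

/-- `K(L)` is 1-involutive: `(a,b) ⇨ (1,1) = (b,a)`, and hence the double
negation of `(a,b)` is `(a,b)` itself. -/
theorem stmt1 {L : Type*} [CIRL L] (a b : L) :
    kimp (a, b) kone = (b, a) ∧ kimp (kimp (a, b) kone) kone = (a, b) :=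
  ⟨kimp_kone (a, b), kimp_kone_involutive (a, b)⟩
end

section
/- Let L be a commutative integral residuated lattice. Then K(L) is 1-distributive: for all X, Y, Z in K(L) such that at least one of X, Y, Z equals (1,1), both lattice distributive laws hold, namely X ∧ (Y ∨ Z) = (X ∧ Y) ∨ (X ∧ Z) and X ∨ (Y ∧ Z) = (X ∨ Y) ∧ (X ∨ Z). -/
open CIRL

/-!
Forgetting the product and the implication, `K(L)` is the lattice `L × Lᵒᵈ`. By integrality `1` is
the top element of `L`, and the top element of any lattice is neutral. Neutrality is self-dual and
passes to products coordinatewise, so `(1, 1)` is neutral in `L × Lᵒᵈ`.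
-/

open OrderDual

/-- A neutral element of a lattice (in the sense of Grätzer): every triple containing it satisfies
both distributive laws. The 1-distributivity of `K(L)` is neutrality of its unit. -/
def IsNeutral {α : Type*} [Lattice α] (c : α) : Prop :=
  ∀ x y z : α, x = c ∨ y = c ∨ z = c →
    x ⊓ (y ⊔ z) = x ⊓ y ⊔ x ⊓ z ∧ x ⊔ y ⊓ z = (x ⊔ y) ⊓ (x ⊔ z)

section Lattice

variable {α β : Type*} [Lattice α] [Lattice β]

theorem isNeutral_of_isTop {t : α} (ht : IsTop t) : IsNeutral t := by
  have inf_top (a : α) : a ⊓ t = a := inf_eq_left.2 (ht a)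
  have top_inf (a : α) : t ⊓ a = a := inf_eq_right.2 (ht a)
  have sup_top (a : α) : a ⊔ t = t := sup_eq_right.2 (ht a)
  have top_sup (a : α) : t ⊔ a = t := sup_eq_left.2 (ht a)
  rintro x y z (rfl | rfl | rfl)
  · simp only [top_inf, top_sup, and_self]
  · simp only [top_sup, top_inf, inf_top, sup_top, sup_inf_self, and_self]
  · simp only [sup_top, inf_top, sup_comm (x ⊓ y), sup_inf_self, and_self]

namespace IsNeutral

theorem toDual {c : α} (hc : IsNeutral c) : IsNeutral (toDual c) :=
  fun x y z h => (hc (ofDual x) (ofDual y) (ofDual z) h).symm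

theorem prodMk {a : α} {b : β} (ha : IsNeutral a) (hb : IsNeutral b) : IsNeutral (a, b) := by
  intro x y z h
  have h_fst := ha x.1 y.1 z.1 <|
    h.imp (congrArg Prod.fst) (Or.imp (congrArg Prod.fst) (congrArg Prod.fst))
  have h_snd := hb x.2 y.2 z.2 <|
    h.imp (congrArg Prod.snd) (Or.imp (congrArg Prod.snd) (congrArg Prod.snd))
  exact ⟨Prod.ext h_fst.1 h_snd.1, Prod.ext h_fst.2 h_snd.2⟩

end IsNeutral

theorem stmt2_general {a b : α} (ha : IsNeutral a) (hb : IsNeutral b) :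
    IsNeutral ((a, toDual b) : α × αᵒᵈ) :=
  ha.prodMk hb.toDual

end Lattice

/-- `K(L)` is 1-distributive: both lattice distributive laws hold whenever at
least one of the three elements is the unit `(1,1)`. -/
theorem stmt2 {L : Type*} [CIRL L] (X Y Z : L × L)
    (h : X = kone ∨ Y = kone ∨ Z = kone) :
    kmeet X (kjoin Y Z) = kjoin (kmeet X Y) (kmeet X Z) ∧
    kjoin X (kmeet Y Z) = kmeet (kjoin X Y) (kjoin X Z) := by
  have one_neutral : IsNeutral (1 : L) := isNeutral_of_isTop CIRL.le_one
  -- `kmeet` and `kjoin` are definitionally the lattice operations of `L × Lᵒᵈ`.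
  exact stmt2_general one_neutral one_neutral X Y Z h
end

section
/- Let L be a commutative integral residuated lattice, and write ¬X = X ⇨ (1,1) for X ∈ K(L). Then K(L) satisfies equation (K1): X·Y ∧ (1,1) = (X ∧ (1,1))·(Y ∧ (1,1)) for all X, Y in K(L), and equation (K2): ((X ∧ (1,1)) ⇨ Y) ∧ ((¬Y ∧ (1,1)) ⇨ ¬X) = X ⇨ Y for all X, Y in K(L). -/
open CIRL

namespace CIRL

variable {L : Type*} [CIRL L]

theorem kmeet_kone (X : L × L) : kmeet X kone = (X.1, 1) :=
  Prod.ext (inf_of_le_left (le_one X.1)) (sup_of_le_right (le_one X.2))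

theorem kmul_mk_one_mk_one (a b : L) : kmul (a, 1) (b, 1) = (a * b, 1) := by
  simp only [kmul, imp_one, inf_idem]

theorem kimp_mk_one_left (a : L) (Y : L × L) : kimp (a, 1) Y = (imp a Y.1, a * Y.2) := by
  simp only [kimp, imp_one, inf_of_le_left (le_one (imp a Y.1))]

end CIRL

/-- `K(L)` satisfies the equations (K1) and (K2), where `¬X = X ⇨ (1,1)`. -/
theorem stmt3 {L : Type*} [CIRL L] (X Y : L × L) :
    kmeet (kmul X Y) kone = kmul (kmeet X kone) (kmeet Y kone) ∧
    kmeet (kimp (kmeet X kone) Y)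
        (kimp (kmeet (kimp Y kone) kone) (kimp X kone)) = kimp X Y := by
  constructor
  · calc
      kmeet (kmul X Y) kone
      _ = (X.1 * Y.1, 1) := kmeet_kone _
      _ = kmul (kmeet X kone) (kmeet Y kone) := by
        rw [kmeet_kone, kmeet_kone, kmul_mk_one_mk_one]
  · calc
      kmeet (kimp (kmeet X kone) Y) (kimp (kmeet (kimp Y kone) kone) (kimp X kone))
      _ = kmeet (imp X.1 Y.1, X.1 * Y.2) (imp Y.2 X.2, Y.2 * X.1) := by
        simp only [kmeet_kone, kimp_kone, kimp_mk_one_left, Prod.fst_swap, Prod.snd_swap]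
      _ = kimp X Y := by
        simp only [kmeet, kimp, mul_comm Y.2, sup_idem]
end

section
/- Let A be a commutative residuated lattice satisfying (K1): (x·y) ∧ 1 = (x ∧ 1)·(y ∧ 1) for all x, y. Then A satisfies (x ∧ 1) ⇨₁ y = (x ∧ 1) ⇨₁ (y ∧ 1) for all x, y, where a ⇨₁ b = (a ⇨ b) ∧ 1. -/
/-- A commutative residuated lattice (not necessarily integral). -/
class CRL (A : Type*) extends Lattice A, CommMonoid A where
  imp : A → A → A
  resid : ∀ a b c : A, a * b ≤ c ↔ a ≤ imp b c

namespace CRL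

/-- `a ⇨₁ b = (a ⇨ b) ∧ 1`. -/
def imp1 {A : Type*} [CRL A] (a b : A) : A := imp a b ⊓ 1

end CRL

namespace CRL

variable {A : Type*} [CRL A]

theorem imp_inf (a b c : A) : imp a (b ⊓ c) = imp a b ⊓ imp a c :=
  eq_of_forall_le_iff fun z => by simp only [le_inf_iff, ← resid]

theorem one_le_imp_iff {a b : A} : 1 ≤ imp a b ↔ a ≤ b := by
  rw [← resid, one_mul]

end CRL

theorem stmt6_general {A : Type*} [CRL A] {a c : A} (hac : a ≤ c) (b : A) :
    CRL.imp1 a b = CRL.imp1 a (b ⊓ c) := by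
  have one_le_imp : 1 ≤ CRL.imp a c := CRL.one_le_imp_iff.mpr hac
  calc CRL.imp a b ⊓ 1
      = CRL.imp a b ⊓ (CRL.imp a c ⊓ 1) := by rw [inf_eq_right.mpr one_le_imp]
    _ = CRL.imp a (b ⊓ c) ⊓ 1 := by rw [CRL.imp_inf, inf_assoc]

/-- In any commutative residuated lattice satisfying (K1),
`(x ∧ 1) ⇨₁ y = (x ∧ 1) ⇨₁ (y ∧ 1)` holds. -/
theorem stmt6 {A : Type*} [CRL A]
    (hK1 : ∀ x y : A, (x * y) ⊓ 1 = (x ⊓ 1) * (y ⊓ 1)) :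
    ∀ x y : A, CRL.imp1 (x ⊓ 1) y = CRL.imp1 (x ⊓ 1) (y ⊓ 1) := by
  intro x y
  exact stmt6_general inf_le_right y
end

section
/- Let L be a commutative integral residuated lattice with least element 0 such that 0 ≠ 1 and 0 is meet-irreducible (for all a, b ∈ L, a ∧ b = 0 implies a = 0 or b = 0). Then the set (L × L) \ {(0,0)} is an admissible subuniverse of K(L): it contains (a,1) for every a ∈ L and is closed under the K-expansion operations ∨, ∧, ·, ⇨; in particular, for all (a,b), (c,d) ∈ L × L with (a,b) ≠ (0,0) and (c,d) ≠ (0,0), both (a,b) ∧ (c,d) ≠ (0,0) and (a,b) · (c,d) ≠ (0,0). -/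
open CIRL

/-!
The involution `(a, b) ↦ (b, a)` of `L × L` fixes `(0, 0)` and exchanges join and meet; moreover
`X ⇨ (c, d)` is the swap of `X · (d, c)`. So it suffices to treat joins and products. If
`(a, b) · (c, d) = (0, 0)`, then `a · c = 0` and, by meet-irreducibility, `a ⇨ d = 0` or
`c ⇨ b = 0`. In the first case `d ≤ a ⇨ d` by integrality and `c ≤ a ⇨ d` by residuation, hence
`(c, d) = (0, 0)`; symmetrically, the second case gives `(a, b) = (0, 0)`.
-/

namespace CIRL

theorem swap_ne_diag {α : Type*} {a : α} {X : α × α} (hX : X ≠ (a, a)) : X.swap ≠ (a, a) :=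
  Prod.swap_injective.ne hX

variable {L : Type*} [CIRL L]

theorem le_imp_iff_mul_le {a b c : L} : b ≤ imp a c ↔ a * b ≤ c := by
  rw [mul_comm, resid]

theorem mul_le_right (a b : L) : a * b ≤ b := by
  rw [resid]
  calc a ≤ 1 := le_one a
    _ ≤ imp b b := (resid 1 b b).1 (one_mul b).le

theorem le_imp (a b : L) : b ≤ imp a b :=
  le_imp_iff_mul_le.2 (mul_le_right a b)

theorem mk_eq_bot_of_mul_eq_bot_of_imp_eq_bot [OrderBot L] {a c d : L} (hmul : a * c = ⊥)
    (himp : imp a d = ⊥) : (c, d) = (⊥, ⊥) := by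
  have hc : c ≤ imp a d := le_imp_iff_mul_le.2 (hmul.trans_le bot_le)
  have hd : d ≤ imp a d := le_imp a d
  rw [himp, le_bot_iff] at hc hd
  rw [hc, hd]

theorem kmeet_eq_swap_kjoin_swap (X Y : L × L) :
    kmeet X Y = (kjoin X.swap Y.swap).swap :=
  rfl

theorem kimp_eq_swap_kmul_swap (X Y : L × L) : kimp X Y = (kmul X Y.swap).swap :=
  rfl

variable [OrderBot L] {X Y : L × L}

theorem kjoin_ne_bot (hbot : InfIrred (⊥ : L)) (hX : X ≠ (⊥, ⊥)) (hY : Y ≠ (⊥, ⊥)) :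
    kjoin X Y ≠ (⊥, ⊥) := by
  intro h
  obtain ⟨hsup, hinf⟩ := Prod.mk.inj h
  obtain ⟨hX₁, hY₁⟩ := sup_eq_bot_iff.1 hsup
  rcases hbot.2 hinf with hX₂ | hY₂
  · exact hX (Prod.ext hX₁ hX₂)
  · exact hY (Prod.ext hY₁ hY₂)

theorem kmul_ne_bot (hbot : InfIrred (⊥ : L)) (hX : X ≠ (⊥, ⊥)) (hY : Y ≠ (⊥, ⊥)) :
    kmul X Y ≠ (⊥, ⊥) := by
  intro h
  obtain ⟨hmul, hinf⟩ := Prod.mk.inj h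
  rcases hbot.2 hinf with himp | himp
  · exact hY (mk_eq_bot_of_mul_eq_bot_of_imp_eq_bot hmul himp)
  · exact hX (mk_eq_bot_of_mul_eq_bot_of_imp_eq_bot ((mul_comm _ _).trans hmul) himp)

theorem kmeet_ne_bot (hbot : InfIrred (⊥ : L)) (hX : X ≠ (⊥, ⊥)) (hY : Y ≠ (⊥, ⊥)) :
    kmeet X Y ≠ (⊥, ⊥) := by
  rw [kmeet_eq_swap_kjoin_swap]
  exact swap_ne_diag (kjoin_ne_bot hbot (swap_ne_diag hX) (swap_ne_diag hY))

theorem kimp_ne_bot (hbot : InfIrred (⊥ : L)) (hX : X ≠ (⊥, ⊥)) (hY : Y ≠ (⊥, ⊥)) :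
    kimp X Y ≠ (⊥, ⊥) := by
  rw [kimp_eq_swap_kmul_swap]
  exact swap_ne_diag (kmul_ne_bot hbot hX (swap_ne_diag hY))

end CIRL

/-- If `L` is a CIRL with least element `0 ≠ 1` in which `0` is meet-irreducible,
then `(L × L) \ {(0,0)}` is an admissible subuniverse of `K(L)`. -/
theorem stmt8 {L : Type*} [CIRL L] (z : L) (hz : ∀ a : L, z ≤ a) (hne : z ≠ 1)
    (hirr : ∀ a b : L, a ⊓ b = z → a = z ∨ b = z) :
    let S : Set (L × L) := {p | p ≠ (z, z)}
    (∀ a : L, (a, (1 : L)) ∈ S) ∧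
    kone ∈ S ∧
    (∀ X Y : L × L, X ∈ S → Y ∈ S →
      kjoin X Y ∈ S ∧ kmeet X Y ∈ S ∧ kmul X Y ∈ S ∧ kimp X Y ∈ S) ∧
    (∀ X Y : L × L, X ≠ (z, z) → Y ≠ (z, z) →
      kmeet X Y ≠ (z, z) ∧ kmul X Y ≠ (z, z)) := by
  intro S
  let _ : OrderBot L := { bot := z, bot_le := hz }
  have hbot : InfIrred (⊥ : L) :=
    ⟨fun hmax => hne (hmax.eq_of_le (le_one z)), fun a b => hirr a b⟩
  have hadm : ∀ a : L, (a, (1 : L)) ∈ S := fun a h => hne (congrArg Prod.snd h).symm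
  exact ⟨hadm, hadm 1,
    fun X Y hX hY => ⟨kjoin_ne_bot hbot hX hY, kmeet_ne_bot hbot hX hY,
      kmul_ne_bot hbot hX hY, kimp_ne_bot hbot hX hY⟩,
    fun X Y hX hY => ⟨kmeet_ne_bot hbot hX hY, kmul_ne_bot hbot hX hY⟩⟩
end

section
/- Let B be a generalized Heyting algebra (a Brouwerian lattice): a lattice with greatest element ⊤ and a binary operation ⇨ with a ∧ b ≤ c if and only if a ≤ b ⇨ c. Let F be a regular filter of B, i.e. a lattice filter containing every dense element a ∨ (a ⇨ b) for a, b ∈ B. Then the set K(B,F) = {(a,b) ∈ B × B : a ∨ b ∈ F} is an admissible subuniverse of K(B): it contains (a,⊤) for every a ∈ B and is closed under the K-expansion operations ∨, ∧, ·, ⇨ (where the monoid product of B is ∧ with unit ⊤). -/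
/-!
Exchanging the coordinates, `Z ↦ Z.swap`, preserves `K(B,F)`. It turns the join of `K(B)` into the
meet, and `X ⇨ Y` is `(X · Y.swap).swap`, so only join and product need an argument. For the product
of `(a, b)` and `(c, d)`, distributivity writes `(a ⊓ c) ⊔ ((a ⇨ d) ⊓ (c ⇨ b))` as the meet of
`a ⊔ (a ⇨ d)` and `c ⊔ (c ⇨ b)`, which are dense, and of `a ⊔ (c ⇨ b)` and `c ⊔ (a ⇨ d)`, which lie
above `a ⊔ b` and `c ⊔ d` respectively.
-/

open Order

theorem isPFilter_of_inf_mem {P : Type*} [SemilatticeInf P] {F : Set P} (nonempty : F.Nonempty)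
    (mem_of_le : ∀ a b : P, a ∈ F → a ≤ b → b ∈ F)
    (inf_mem : ∀ a b : P, a ∈ F → b ∈ F → a ⊓ b ∈ F) : IsPFilter F :=
  IsPFilter.of_def nonempty
    (fun a ha b hb => ⟨a ⊓ b, inf_mem a b ha hb, inf_le_left, inf_le_right⟩)
    (fun hab ha => mem_of_le _ _ ha hab)

namespace KExpansion

variable {B : Type*}

/-- The join of the K-expansion `K(B)`, whose order is reversed in the second coordinate. -/
def join [Lattice B] (X Y : B × B) : B × B := (X.1 ⊔ Y.1, X.2 ⊓ Y.2)

/-- The meet of the K-expansion `K(B)`, whose order is reversed in the second coordinate. -/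
def meet [Lattice B] (X Y : B × B) : B × B := (X.1 ⊓ Y.1, X.2 ⊔ Y.2)

/-- The monoid product of the K-expansion `K(B)`, for `B` with monoid product `⊓`. -/
def mul [GeneralizedHeytingAlgebra B] (X Y : B × B) : B × B :=
  (X.1 ⊓ Y.1, (X.1 ⇨ Y.2) ⊓ (Y.1 ⇨ X.2))

/-- The implication of the K-expansion `K(B)`, which is the residual of `KExpansion.mul`. -/
def imp [GeneralizedHeytingAlgebra B] (X Y : B × B) : B × B :=
  ((X.1 ⇨ Y.1) ⊓ (Y.2 ⇨ X.2), X.1 ⊓ Y.2)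

theorem meet_eq_swap_join_swap [Lattice B] (X Y : B × B) :
    meet X Y = (join X.swap Y.swap).swap :=
  rfl

theorem imp_eq_swap_mul_swap [GeneralizedHeytingAlgebra B] (X Y : B × B) :
    imp X Y = (mul X Y.swap).swap :=
  rfl

/-- The set `K(B,F)` of pairs whose join lies in the filter `F`. Lattice filters are encoded as
Mathlib's order filters `Order.PFilter`. -/
def ofFilter [Lattice B] (F : PFilter B) : Set (B × B) := {X | X.1 ⊔ X.2 ∈ F}

/-- A filter is regular if it contains all dense elements, i.e. those of the form `a ⊔ (a ⇨ b)`. -/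
def IsRegular [GeneralizedHeytingAlgebra B] (F : PFilter B) : Prop :=
  ∀ a b : B, a ⊔ (a ⇨ b) ∈ F

theorem mem_ofFilter [Lattice B] {F : PFilter B} {X : B × B} :
    X ∈ ofFilter F ↔ X.1 ⊔ X.2 ∈ F :=
  Iff.rfl

theorem mk_top_mem_ofFilter [Lattice B] [OrderTop B] (F : PFilter B) (a : B) :
    (a, ⊤) ∈ ofFilter F := by
  simp [mem_ofFilter]

theorem swap_mem_ofFilter [Lattice B] {F : PFilter B} {X : B × B} (hX : X ∈ ofFilter F) :
    X.swap ∈ ofFilter F := by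
  rwa [mem_ofFilter, Prod.fst_swap, Prod.snd_swap, sup_comm]

section DistribLattice

variable [DistribLattice B] {F : PFilter B} {X Y : B × B}

theorem join_mem_ofFilter (hX : X ∈ ofFilter F) (hY : Y ∈ ofFilter F) :
    join X Y ∈ ofFilter F := by
  rw [mem_ofFilter, join, sup_inf_left]
  exact PFilter.inf_mem (PFilter.mem_of_le (sup_le_sup_right le_sup_left _) hX)
    (PFilter.mem_of_le (sup_le_sup_right le_sup_right _) hY)

theorem meet_mem_ofFilter (hX : X ∈ ofFilter F) (hY : Y ∈ ofFilter F) :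
    meet X Y ∈ ofFilter F := by
  rw [meet_eq_swap_join_swap]
  exact swap_mem_ofFilter (join_mem_ofFilter (swap_mem_ofFilter hX) (swap_mem_ofFilter hY))

end DistribLattice

section GeneralizedHeytingAlgebra

variable [GeneralizedHeytingAlgebra B] {F : PFilter B} {X Y : B × B}

theorem sup_himp_mem_of_mem_ofFilter (hX : X ∈ ofFilter F) (c : B) : X.1 ⊔ (c ⇨ X.2) ∈ F :=
  PFilter.mem_of_le (sup_le_sup_left le_himp _) hX

theorem mul_mem_ofFilter (hF : IsRegular F) (hX : X ∈ ofFilter F) (hY : Y ∈ ofFilter F) :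
    mul X Y ∈ ofFilter F := by
  rw [mem_ofFilter, mul, sup_inf_right, sup_inf_left, sup_inf_left]
  exact PFilter.inf_mem
    (PFilter.inf_mem (hF X.1 Y.2) (sup_himp_mem_of_mem_ofFilter hX Y.1))
    (PFilter.inf_mem (sup_himp_mem_of_mem_ofFilter hY X.1) (hF Y.1 X.2))

theorem imp_mem_ofFilter (hF : IsRegular F) (hX : X ∈ ofFilter F) (hY : Y ∈ ofFilter F) :
    imp X Y ∈ ofFilter F := by
  rw [imp_eq_swap_mul_swap]
  exact swap_mem_ofFilter (mul_mem_ofFilter hF hX (swap_mem_ofFilter hY))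

end GeneralizedHeytingAlgebra

end KExpansion

open KExpansion

/-- If `B` is a generalized Heyting algebra (Brouwerian lattice) and `F` is a
regular filter of `B` (a lattice filter containing every dense element
`a ⊔ (a ⇨ b)`), then `K(B,F) = {(a,b) : a ⊔ b ∈ F}` is an admissible
subuniverse of `K(B)`, where the monoid product of `B` is `⊓` with unit `⊤`. -/
theorem stmt11 {B : Type*} [GeneralizedHeytingAlgebra B] (F : Set B)
    (hFne : F.Nonempty)
    (hFup : ∀ a b : B, a ∈ F → a ≤ b → b ∈ F)
    (hFmeet : ∀ a b : B, a ∈ F → b ∈ F → a ⊓ b ∈ F)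
    (hFreg : ∀ a b : B, a ⊔ (a ⇨ b) ∈ F) :
    let kjoin : B × B → B × B → B × B := fun X Y => (X.1 ⊔ Y.1, X.2 ⊓ Y.2)
    let kmeet : B × B → B × B → B × B := fun X Y => (X.1 ⊓ Y.1, X.2 ⊔ Y.2)
    let kmul : B × B → B × B → B × B :=
      fun X Y => (X.1 ⊓ Y.1, (X.1 ⇨ Y.2) ⊓ (Y.1 ⇨ X.2))
    let kimp : B × B → B × B → B × B :=
      fun X Y => ((X.1 ⇨ Y.1) ⊓ (Y.2 ⇨ X.2), X.1 ⊓ Y.2)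
    let S : Set (B × B) := {p | p.1 ⊔ p.2 ∈ F}
    (∀ a : B, (a, (⊤ : B)) ∈ S) ∧
    ((⊤ : B), (⊤ : B)) ∈ S ∧
    (∀ X Y : B × B, X ∈ S → Y ∈ S →
      kjoin X Y ∈ S ∧ kmeet X Y ∈ S ∧ kmul X Y ∈ S ∧ kimp X Y ∈ S) := by
  intro kjoin kmeet kmul kimp S
  let G : PFilter B := (isPFilter_of_inf_mem hFne hFup hFmeet).toPFilter
  have hG : IsRegular G := hFreg
  have hS : S = ofFilter G := rfl
  rw [hS]
  exact ⟨mk_top_mem_ofFilter G, mk_top_mem_ofFilter G ⊤, fun X Y hX hY =>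
    ⟨join_mem_ofFilter hX hY, meet_mem_ofFilter hX hY, mul_mem_ofFilter hG hX hY,
      imp_mem_ofFilter hG hX hY⟩⟩
end

section
/- Let A be a K-lattice whose negative cone is cancellative, that is, (a ⇨ a·b) ∧ 1 = b for all a, b ∈ A with a ≤ 1 and b ≤ 1. Then the map f(a) = (a ∧ 1, ¬a ∧ 1) from A to A^- × A^- is surjective: for all u, v ∈ A with u ≤ 1 and v ≤ 1 there exists c ∈ A with c ∧ 1 = u and ¬c ∧ 1 = v. -/
/-- A K-lattice: a commutative residuated lattice that is 1-involutive,
1-distributive and satisfies the equations (K1) and (K2). -/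
class KLattice (A : Type*) extends Lattice A, CommMonoid A where
  imp : A → A → A
  resid : ∀ a b c : A, a * b ≤ c ↔ a ≤ imp b c
  inv1 : ∀ x : A, imp (imp x 1) 1 = x
  dist1 : ∀ x y z : A, (x = 1 ∨ y = 1 ∨ z = 1) →
    x ⊓ (y ⊔ z) = (x ⊓ y) ⊔ (x ⊓ z) ∧ x ⊔ (y ⊓ z) = (x ⊔ y) ⊓ (x ⊔ z)
  k1 : ∀ x y : A, (x * y) ⊓ 1 = (x ⊓ 1) * (y ⊓ 1)
  k2 : ∀ x y : A,
    imp (x ⊓ 1) y ⊓ imp (imp y 1 ⊓ 1) (imp x 1) = imp x y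

namespace KLattice

/-- The involution `¬x = x ⇨ 1`. -/
def neg {A : Type*} [KLattice A] (x : A) : A := imp x 1

end KLattice

open KLattice

/-!
The preimage of `(u, v)` is `c = u * ¬(u * v)`. Since `u * v ≤ 1`, the second factor is above `1`,
so (K1) gives `c ⊓ 1 = u`; by currying and involutivity `¬c = u ⇨ ¬¬(u * v) = u ⇨ u * v`, whose
meet with `1` is `v` by cancellativity.
-/

/-- A residuated multiplication on an ordered type: `a ⇨ c` is the largest `x` with `x * a ≤ c`.
This is a mixin: a commutative residuated lattice is a type with `Lattice`, `CommMonoid` and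
`Residuated` instances. -/
class Residuated (A : Type*) [Mul A] [LE A] extends HImp A where
  mul_le_iff_le_himp : ∀ a b c : A, a * b ≤ c ↔ a ≤ b ⇨ c

namespace Residuated

theorem isOrderedMonoid (A : Type*) [CommMonoid A] [Preorder A] [Residuated A] :
    IsOrderedMonoid A where
  mul_le_mul_left a b hab c :=
    (mul_le_iff_le_himp a c (b * c)).2 (hab.trans ((mul_le_iff_le_himp b c (b * c)).1 le_rfl))

theorem one_le_himp_iff {A : Type*} [MulOneClass A] [LE A] [Residuated A] {a b : A} :
    1 ≤ a ⇨ b ↔ a ≤ b := by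
  rw [← mul_le_iff_le_himp, one_mul]

variable {A : Type*} [Semigroup A] [PartialOrder A] [Residuated A]

theorem mul_himp (a b c : A) : a * b ⇨ c = a ⇨ b ⇨ c :=
  eq_of_forall_le_iff fun x => by
    simp only [← mul_le_iff_le_himp, mul_assoc]

theorem mul_himp_himp_of_himp_himp_eq {b d : A} (hb : (b ⇨ d) ⇨ d = b) (a : A) :
    a * (b ⇨ d) ⇨ d = a ⇨ b := by
  rw [mul_himp, hb]

end Residuated

theorem mul_inf_one_eq_left {A : Type*} [SemilatticeInf A] [MulOneClass A]
    (hk1 : ∀ x y : A, (x * y) ⊓ 1 = (x ⊓ 1) * (y ⊓ 1)) {a b : A} (ha : a ≤ 1) (hb : 1 ≤ b) :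
    (a * b) ⊓ 1 = a := by
  rw [hk1, inf_eq_left.2 ha, inf_eq_right.2 hb, mul_one]

open Residuated

theorem stmt12_general {A : Type*} [SemilatticeInf A] [CommMonoid A] [Residuated A]
    (hinv : ∀ x : A, (x ⇨ 1) ⇨ 1 = x)
    (hk1 : ∀ x y : A, (x * y) ⊓ 1 = (x ⊓ 1) * (y ⊓ 1))
    (hcanc : ∀ a b : A, a ≤ 1 → b ≤ 1 → (a ⇨ a * b) ⊓ 1 = b) :
    ∀ u v : A, u ≤ 1 → v ≤ 1 → ∃ c : A, c ⊓ 1 = u ∧ (c ⇨ 1) ⊓ 1 = v := by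
  intro u v hu hv
  have := isOrderedMonoid A
  have one_le_neg : 1 ≤ u * v ⇨ 1 := one_le_himp_iff.2 (mul_le_one' hu hv)
  have neg_eq : u * (u * v ⇨ 1) ⇨ 1 = u ⇨ u * v := mul_himp_himp_of_himp_himp_eq (hinv _) u
  exact ⟨u * (u * v ⇨ 1), mul_inf_one_eq_left hk1 hu one_le_neg, neg_eq ▸ hcanc u v hu hv⟩

instance KLattice.instResiduated {A : Type*} [KLattice A] : Residuated A where
  himp := imp
  mul_le_iff_le_himp := resid

/-- If `A` is a K-lattice whose negative cone is cancellative, then the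
canonical embedding `a ↦ (a ∧ 1, ¬a ∧ 1)` of `A` into `K(A⁻)` is surjective. -/
theorem stmt12 {A : Type*} [KLattice A]
    (hcanc : ∀ a b : A, a ≤ 1 → b ≤ 1 → KLattice.imp a (a * b) ⊓ 1 = b) :
    ∀ u v : A, u ≤ 1 → v ≤ 1 → ∃ c : A, c ⊓ 1 = u ∧ neg c ⊓ 1 = v := by
  exact stmt12_general inv1 k1 hcanc
end

section
/- Let A be a K-lattice with least element 0 such that 0 ≠ 1, and set ⊤ = 0 ⇨ 1. Then ⊤ is the greatest element of A, and the three-element set {0, 1, ⊤} is a subuniverse of A: it is closed under ∧, ∨, ·, ⇨; in particular 0·0 = 0, ⊤·⊤ = ⊤, 0·⊤ = 0, 0 ⇨ 1 = ⊤ and ⊤ ⇨ 1 = 0. -/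
open KLattice

/-!
Residuation makes the commutative multiplication monotone and a least element `⊥` absorbing, so
`⊥ ⇨ c` is the greatest element `⊤`. As `1 ≤ ⊤`, we get `a ≤ a * ⊤` for all `a`, which gives
`⊤ * ⊤ = ⊤` and `⊤ ⇨ ⊥ = ⊥`. The one entry of the operation tables on `{⊥, 1, ⊤}` that does not
come from residuation is `⊤ ⇨ 1 = ⊥`, the involution law at `⊥`.
-/

/-- `b ⇨ ·` is right adjoint to `· * b`. A `Lattice` and `CommMonoid` with this property is a
commutative residuated lattice; the property is separated from these structures because parts of
the theory need only an ordered magma. -/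
class IsResiduated (A : Type*) [LE A] [Mul A] [HImp A] : Prop where
  mul_le_iff_le_himp (a b c : A) : a * b ≤ c ↔ a ≤ b ⇨ c

namespace IsResiduated

variable {A : Type*}

theorem le_himp_comm [LE A] [CommMagma A] [HImp A] [IsResiduated A] {a b c : A} :
    a ≤ b ⇨ c ↔ b ≤ a ⇨ c := by
  rw [← mul_le_iff_le_himp, ← mul_le_iff_le_himp, mul_comm]

theorem isTop_himp_of_isBot [LE A] [CommMagma A] [HImp A] [IsResiduated A] {b : A}
    (hb : IsBot b) (c : A) : IsTop (b ⇨ c) :=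
  fun _ => le_himp_comm.2 (hb _)

instance mulLeftMono [Preorder A] [CommMagma A] [HImp A] [IsResiduated A] : MulLeftMono A where
  elim c a b hab := by
    have le_himp_mul : b ≤ c ⇨ b * c := (mul_le_iff_le_himp b c _).1 le_rfl
    change c * a ≤ c * b
    rw [mul_comm c a, mul_comm c b]
    exact (mul_le_iff_le_himp a c _).2 (hab.trans le_himp_mul)

theorem himp_mul_le [Preorder A] [Mul A] [HImp A] [IsResiduated A] (a b : A) :
    (a ⇨ b) * a ≤ b :=
  (mul_le_iff_le_himp _ _ _).2 le_rfl

section PartialOrder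

variable [PartialOrder A] [HImp A]

theorem one_himp [MulOneClass A] [IsResiduated A] (a : A) : 1 ⇨ a = a :=
  eq_of_forall_le_iff fun c => by rw [← mul_le_iff_le_himp, mul_one]

theorem bot_mul [Mul A] [IsResiduated A] [OrderBot A] (a : A) : ⊥ * a = ⊥ :=
  le_bot_iff.1 ((mul_le_iff_le_himp _ _ _).2 bot_le)

theorem mul_bot [CommMagma A] [IsResiduated A] [OrderBot A] (a : A) : a * ⊥ = ⊥ := by
  rw [mul_comm, bot_mul]

theorem himp_top [Mul A] [IsResiduated A] [OrderTop A] (a : A) : a ⇨ ⊤ = ⊤ :=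
  top_le_iff.1 ((mul_le_iff_le_himp _ _ _).1 le_top)

theorem bot_himp [CommMagma A] [IsResiduated A] [BoundedOrder A] (a : A) : ⊥ ⇨ a = ⊤ :=
  (isTop_himp_of_isBot isBot_bot a).eq_top

theorem le_mul_top [CommMonoid A] [IsResiduated A] [OrderTop A] (a : A) : a ≤ a * ⊤ :=
  le_mul_of_one_le_right' le_top

theorem top_mul_top [CommMonoid A] [IsResiduated A] [OrderTop A] : (⊤ : A) * ⊤ = ⊤ :=
  top_le_iff.1 (le_mul_top ⊤)

theorem top_himp_bot [CommMonoid A] [IsResiduated A] [BoundedOrder A] : (⊤ : A) ⇨ ⊥ = ⊥ :=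
  le_bot_iff.1 ((le_mul_top _).trans (himp_mul_le ⊤ ⊥))

end PartialOrder

theorem bot_one_top_closed [Lattice A] [BoundedOrder A] [CommMonoid A] [HImp A] [IsResiduated A]
    (top_himp_one : (⊤ : A) ⇨ 1 = ⊥) :
    ∀ x ∈ ({⊥, 1, ⊤} : Set A), ∀ y ∈ ({⊥, 1, ⊤} : Set A),
      x ⊓ y ∈ ({⊥, 1, ⊤} : Set A) ∧ x ⊔ y ∈ ({⊥, 1, ⊤} : Set A) ∧
      x * y ∈ ({⊥, 1, ⊤} : Set A) ∧ x ⇨ y ∈ ({⊥, 1, ⊤} : Set A) := by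
  rintro x (rfl | rfl | rfl) y (rfl | rfl | rfl) <;>
    simp [bot_mul, mul_bot, top_mul_top, bot_himp, one_himp, himp_top, top_himp_bot, top_himp_one]

end IsResiduated

namespace KLattice

variable {A : Type*} [KLattice A]

instance toHImp : HImp A := ⟨imp⟩

instance isResiduated : IsResiduated A := ⟨resid⟩

end KLattice

theorem stmt13_general {A : Type*} [Lattice A] [CommMonoid A] [HImp A] [IsResiduated A]
    (z : A) (hz : IsBot z) (himp_himp_one : (z ⇨ 1) ⇨ 1 = z) :
    let top : A := z ⇨ 1
    let S : Set A := {z, 1, top}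
    IsTop top ∧
    (∀ x ∈ S, ∀ y ∈ S, x ⊓ y ∈ S ∧ x ⊔ y ∈ S ∧ x * y ∈ S ∧ x ⇨ y ∈ S) ∧
    z * z = z ∧ top * top = top ∧ z * top = z := by
  intro top S
  have isTop_top : IsTop top := IsResiduated.isTop_himp_of_isBot hz 1
  let _ : BoundedOrder A := { bot := z, bot_le := hz, top := top, le_top := isTop_top }
  exact ⟨isTop_top, IsResiduated.bot_one_top_closed himp_himp_one, IsResiduated.bot_mul z,
    IsResiduated.top_mul_top, IsResiduated.bot_mul top⟩

/-- In a nontrivial K-lattice with least element `0`, the element `⊤ = 0 ⇨ 1`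
is the greatest element and `{0, 1, ⊤}` is a subuniverse (isomorphic to K₃). -/
theorem stmt13 {A : Type*} [KLattice A] (z : A) (hz : ∀ a : A, z ≤ a)
    (hne : z ≠ 1) :
    let top : A := KLattice.imp z 1
    let S : Set A := {z, 1, top}
    (∀ a : A, a ≤ top) ∧
    (∀ x ∈ S, ∀ y ∈ S, x ⊓ y ∈ S ∧ x ⊔ y ∈ S ∧ x * y ∈ S ∧ KLattice.imp x y ∈ S) ∧
    z * z = z ∧ top * top = top ∧ z * top = z ∧
    KLattice.imp z 1 = top ∧ KLattice.imp top 1 = z := by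
  obtain ⟨isTop_top, closed, bot_mul_bot, top_mul_top, bot_mul_top⟩ := stmt13_general z hz (inv1 z)
  exact ⟨isTop_top, closed, bot_mul_bot, top_mul_top, bot_mul_top, rfl, inv1 z⟩
end

section
/- Let L be a commutative integral residuated lattice. Then for all a, b ∈ L and every natural number k ≥ 2, the k-th power of (a,b) in K(L) equals (a^k, a^{k-1} ⇨ b). -/
open CIRL

namespace CIRL

/-- Powers in `K(L)` with respect to the K-expansion product. -/
def kpow {L : Type*} [CIRL L] (X : L × L) : ℕ → L × L
  | 0 => kone
  | n + 1 => kmul X (kpow X n)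

end CIRL

namespace CIRL

variable {L : Type*} [CIRL L]

theorem imp_imp (a b c : L) : imp a (imp b c) = imp (a * b) c :=
  eq_of_forall_le_iff fun x => by rw [← resid, ← resid, ← resid, mul_assoc]

theorem kpow_mk_add_one (a b : L) (n : ℕ) :
    kpow (a, b) (n + 1) = (a ^ (n + 1), imp (a ^ n) b) := by
  induction n with
  | zero =>
    calc kpow (a, b) 1 = (a, b) := kmul_kone (a, b)
      _ = (a ^ 1, imp (a ^ 0) b) := by rw [pow_one, pow_zero, one_imp]
  | succ n ih =>
    calc kpow (a, b) (n + 2)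
        = kmul (a, b) (a ^ (n + 1), imp (a ^ n) b) := by rw [← ih, kpow]
      _ = (a * a ^ (n + 1), imp a (imp (a ^ n) b) ⊓ imp (a ^ (n + 1)) b) := rfl
      _ = (a ^ (n + 2), imp (a ^ (n + 1)) b) := by
        rw [imp_imp, ← pow_succ', ← pow_succ', inf_idem]

end CIRL

/-- For `k ≥ 2`, the `k`-th power of `(a,b)` in `K(L)` is `(a^k, a^(k-1) ⇨ b)`. -/
theorem stmt15 {L : Type*} [CIRL L] (a b : L) (k : ℕ) (hk : 2 ≤ k) :
    kpow (a, b) k = (a ^ k, CIRL.imp (a ^ (k - 1)) b) := by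
  obtain ⟨n, rfl⟩ : ∃ n, k = n + 1 := Nat.exists_eq_add_of_le' (one_le_two.trans hk)
  exact kpow_mk_add_one a b n
end

section
/- Let A be a K-lattice that is distributive (as a lattice) and satisfies (x ∧ 1)·(x ∧ 1) = x ∧ 1 for all x (i.e. A is a Nelson paraconsistent lattice). Then: (i) the set F = {(a ∨ ¬a) ∧ 1 : a ∈ A} is a lattice filter of the negative cone A^- containing every element of the form u ∨ (u ⇨₁ v) with u, v ∈ A^-; and (ii) the map f(a) = (a ∧ 1, ¬a ∧ 1) is a bijection from A onto the set K(A^-, F) = {(u,v) : u ≤ 1, v ≤ 1, u ∨ v ∈ F}. -/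
open KLattice

/-!
Call `(u, v)` a twist pair if it equals `(a ⊓ 1, ¬a ⊓ 1)` for some `a`. Twist pairs are closed under
swapping (`a ↦ ¬a`), under `(u ⊔ u', v ⊓ v')` (join of the underlying elements) and, by (K1) and
(K2), under `(u * u', (u ⇨₁ v') ⊓ (u' ⇨₁ v))` (their product). They contain `(u, 1)` for `u ≤ 1`,
hence every `(u, u ⇨₁ v)`.

The set `F` consists exactly of the `w` for which `(w, w)` is a twist pair, so the closure
properties of `F` are instances of these rules. If the negative cone is idempotent, multiplication
is the meet there, so `(u ⇨₁ v) ⊓ (u ⊔ v) = v`; with this identity any `(u, v)` such that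
`u ⊔ v ∈ F` is built from `(u, u ⇨₁ v)`, `(v ⇨₁ u, v)` and `(u ⊔ v, u ⊔ v)`. Injectivity holds since
(K2) recovers the order of `A` from the pairs.
-/

lemma mul_eq_inf_of_le_one {M : Type*} [SemilatticeInf M] [MulOneClass M] [MulLeftMono M]
    [MulRightMono M] {u v : M} (hu : u ≤ 1) (hv : v ≤ 1) (huv : IsIdempotentElem (u ⊓ v)) :
    u * v = u ⊓ v :=
  le_antisymm (le_inf (mul_le_of_le_one_right' hv) (mul_le_of_le_one_left' hu))
    (huv.eq.ge.trans (mul_le_mul' inf_le_left inf_le_right))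

namespace KLattice

variable {A : Type*} [KLattice A] {a b u u' v v' w : A}

instance : IsOrderedMonoid A where
  mul_le_mul_left a b hab c :=
    (resid a c (b * c)).2 (hab.trans ((resid b c (b * c)).1 le_rfl))

lemma one_le_imp_iff : 1 ≤ imp a b ↔ a ≤ b := by
  rw [← resid, one_mul]

protected lemma neg_neg (a : A) : neg (neg a) = a := inv1 a

lemma le_neg_iff_mul_le_one : a ≤ neg b ↔ a * b ≤ 1 := (resid a b 1).symm

lemma le_neg_comm : a ≤ neg b ↔ b ≤ neg a := by
  rw [le_neg_iff_mul_le_one, le_neg_iff_mul_le_one, mul_comm]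

lemma neg_sup (a b : A) : neg (a ⊔ b) = neg a ⊓ neg b :=
  eq_of_forall_le_iff fun c => by
    rw [le_neg_comm, sup_le_iff, le_inf_iff, le_neg_comm, le_neg_comm (b := c)]

protected lemma neg_mul (a b : A) : neg (a * b) = imp a (neg b) :=
  eq_of_forall_le_iff fun c => by
    rw [le_neg_iff_mul_le_one, ← resid, le_neg_iff_mul_le_one, mul_assoc]

lemma sup_inf_one (a b : A) : (a ⊔ b) ⊓ 1 = a ⊓ 1 ⊔ b ⊓ 1 := by
  simpa only [inf_comm] using (dist1 1 a b (.inl rfl)).1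

lemma imp_eq_inf (a b : A) : imp a b = imp (a ⊓ 1) b ⊓ imp (neg b ⊓ 1) (neg a) :=
  (k2 a b).symm

lemma le_iff_inf_one_le : a ≤ b ↔ a ⊓ 1 ≤ b ⊓ 1 ∧ neg b ⊓ 1 ≤ neg a ⊓ 1 := by
  rw [← one_le_imp_iff, imp_eq_inf, le_inf_iff, one_le_imp_iff, one_le_imp_iff]
  simp only [le_inf_iff, inf_le_right, and_true]

/-- The operation `u ⇨₁ v = (u ⇨ v) ∧ 1`, which is the residual of multiplication on the negative
cone. -/
def coneImp (u v : A) : A := imp u v ⊓ 1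

local infixr:60 "⇨₁" => coneImp

lemma coneImp_le_one (u v : A) : (u ⇨₁ v) ≤ 1 := inf_le_right

lemma le_coneImp_iff : w ≤ (u ⇨₁ v) ↔ w * u ≤ v ∧ w ≤ 1 := by
  rw [coneImp, le_inf_iff, resid]

lemma coneImp_inf_one (hu : u ≤ 1) (b : A) : (u ⇨₁ b ⊓ 1) = (u ⇨₁ b) :=
  eq_of_forall_le_iff fun w => by
    simp only [le_coneImp_iff, le_inf_iff]
    exact ⟨fun h => ⟨h.1.1, h.2⟩, fun h => ⟨⟨h.1, mul_le_one' h.2 hu⟩, h.2⟩⟩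

lemma coneImp_one_right (hu : u ≤ 1) : (u ⇨₁ 1) = 1 :=
  le_antisymm (coneImp_le_one u 1) (le_coneImp_iff.2 ⟨by rwa [one_mul], le_rfl⟩)

lemma le_coneImp (hu : u ≤ 1) (hv : v ≤ 1) : v ≤ (u ⇨₁ v) :=
  le_coneImp_iff.2 ⟨mul_le_of_le_one_right' hu, hv⟩

lemma coneImp_mul_sup_le (u v : A) : (u ⇨₁ v) * (u ⊔ v) ≤ v := by
  have modus_ponens : u * (u ⇨₁ v) ≤ v := mul_comm u _ ▸ (le_coneImp_iff.1 le_rfl).1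
  have weakening : v * (u ⇨₁ v) ≤ v := mul_le_of_le_one_right' (coneImp_le_one u v)
  rw [mul_comm, resid]
  exact sup_le ((resid ..).1 modus_ponens) ((resid ..).1 weakening)

lemma mul_eq_inf (hidem : ∀ x : A, (x ⊓ 1) * (x ⊓ 1) = x ⊓ 1) (hu : u ≤ 1) (hv : v ≤ 1) :
    u * v = u ⊓ v := by
  refine mul_eq_inf_of_le_one hu hv ?_
  have huv : u ⊓ v ⊓ 1 = u ⊓ v := inf_eq_left.2 (inf_le_left.trans hu)
  rw [← huv]
  exact hidem (u ⊓ v)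

lemma coneImp_inf_sup (hidem : ∀ x : A, (x ⊓ 1) * (x ⊓ 1) = x ⊓ 1) (hu : u ≤ 1) (hv : v ≤ 1) :
    (u ⇨₁ v) ⊓ (u ⊔ v) = v := by
  refine le_antisymm ?_ (le_inf (le_coneImp hu hv) le_sup_right)
  rw [← mul_eq_inf hidem (coneImp_le_one u v) (sup_le hu hv)]
  exact coneImp_mul_sup_le u v

lemma neg_mul_inf_one (a b : A) :
    neg (a * b) ⊓ 1 = (a ⊓ 1 ⇨₁ neg b ⊓ 1) ⊓ (b ⊓ 1 ⇨₁ neg a ⊓ 1) := by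
  rw [coneImp_inf_one inf_le_right, coneImp_inf_one inf_le_right, KLattice.neg_mul, imp_eq_inf,
    KLattice.neg_neg, inf_inf_distrib_right, coneImp, coneImp]

/-- The pair `(u, v)` is of the form `(a ∧ 1, ¬a ∧ 1)`, i.e. it lies in the range of the map `f` of
the theorem. -/
def IsTwistPair (u v : A) : Prop := ∃ a : A, a ⊓ 1 = u ∧ neg a ⊓ 1 = v

lemma isTwistPair_inf_one (a : A) : IsTwistPair (a ⊓ 1) (neg a ⊓ 1) := ⟨a, rfl, rfl⟩

namespace IsTwistPair

lemma left_le_one (h : IsTwistPair u v) : u ≤ 1 := by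
  obtain ⟨a, rfl, -⟩ := h
  exact inf_le_right

lemma swap (h : IsTwistPair u v) : IsTwistPair v u := by
  obtain ⟨a, rfl, rfl⟩ := h
  exact ⟨neg a, rfl, by rw [KLattice.neg_neg]⟩

lemma right_le_one (h : IsTwistPair u v) : v ≤ 1 := h.swap.left_le_one

lemma sup_inf (h : IsTwistPair u v) (h' : IsTwistPair u' v') :
    IsTwistPair (u ⊔ u') (v ⊓ v') := by
  obtain ⟨a, rfl, rfl⟩ := h
  obtain ⟨b, rfl, rfl⟩ := h'
  exact ⟨a ⊔ b, sup_inf_one a b, by rw [neg_sup, inf_inf_distrib_right]⟩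

lemma inf_sup (h : IsTwistPair u v) (h' : IsTwistPair u' v') :
    IsTwistPair (u ⊓ u') (v ⊔ v') :=
  (h.swap.sup_inf h'.swap).swap

lemma mul (h : IsTwistPair u v) (h' : IsTwistPair u' v') :
    IsTwistPair (u * u') ((u ⇨₁ v') ⊓ (u' ⇨₁ v)) := by
  obtain ⟨a, rfl, rfl⟩ := h
  obtain ⟨b, rfl, rfl⟩ := h'
  exact ⟨a * b, k1 a b, neg_mul_inf_one a b⟩

lemma of_le_one (hu : u ≤ 1) : IsTwistPair u 1 := by
  refine ⟨u, inf_eq_left.2 hu, inf_eq_right.2 ?_⟩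
  rwa [le_neg_iff_mul_le_one, one_mul]

lemma self_coneImp (hu : u ≤ 1) (hv : v ≤ 1) : IsTwistPair u (u ⇨₁ v) := by
  simpa only [mul_one, coneImp_one_right le_rfl, inf_eq_left.2 (coneImp_le_one u v)]
    using (of_le_one hu).mul (of_le_one hv).swap

lemma diag_of_sup_le (h : IsTwistPair u v) (hw : w ≤ 1) (huvw : u ⊔ v ≤ w) :
    IsTwistPair w w := by
  obtain ⟨huw, hvw⟩ := sup_le_iff.1 huvw
  have pair_w_v : IsTwistPair w v := by
    simpa only [sup_eq_right.2 huw, inf_eq_left.2 h.right_le_one] using h.sup_inf (of_le_one hw)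
  simpa only [inf_eq_left.2 hw, sup_eq_right.2 hvw] using pair_w_v.inf_sup (of_le_one hw).swap

lemma diag_sup (h : IsTwistPair u v) : IsTwistPair (u ⊔ v) (u ⊔ v) :=
  h.diag_of_sup_le (sup_le h.left_le_one h.right_le_one) le_rfl

lemma diag_inf (hidem : ∀ x : A, (x ⊓ 1) * (x ⊓ 1) = x ⊓ 1)
    (h : IsTwistPair u u) (h' : IsTwistPair v v) : IsTwistPair (u ⊓ v) (u ⊓ v) := by
  have hu := h.left_le_one
  have hv := h'.left_le_one
  have equiv_inf_sup : (u ⇨₁ v) ⊓ (v ⇨₁ u) ⊓ (u ⊔ v) = u ⊓ v := by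
    rw [inf_inf_distrib_right, coneImp_inf_sup hidem hu hv, sup_comm,
      coneImp_inf_sup hidem hv hu, inf_comm]
  simpa only [mul_eq_inf hidem hu hv, sup_idem, equiv_inf_sup]
    using (h.mul h').sup_inf (h.inf_sup h')

lemma of_diag_sup (hidem : ∀ x : A, (x ⊓ 1) * (x ⊓ 1) = x ⊓ 1) (hu : u ≤ 1) (hv : v ≤ 1)
    (h : IsTwistPair (u ⊔ v) (u ⊔ v)) : IsTwistPair u v := by
  have pair_u_sup : IsTwistPair u (u ⊔ v) := by
    simpa only [sup_comm u v, coneImp_inf_sup hidem hv hu, sup_eq_right.2 le_sup_left]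
      using (self_coneImp hv hu).swap.inf_sup h
  simpa only [sup_idem, coneImp_inf_sup hidem hu hv]
    using (self_coneImp hu hv).sup_inf pair_u_sup

end IsTwistPair

lemma exists_eq_sup_neg_inf_one_iff :
    (∃ a : A, w = (a ⊔ neg a) ⊓ 1) ↔ IsTwistPair w w := by
  constructor
  · rintro ⟨a, rfl⟩
    rw [sup_inf_one]
    exact (isTwistPair_inf_one a).diag_sup
  · rintro ⟨a, ha, hna⟩
    exact ⟨a, by rw [sup_inf_one, ha, hna, sup_idem]⟩

lemma isTwistPair_iff (hidem : ∀ x : A, (x ⊓ 1) * (x ⊓ 1) = x ⊓ 1) :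
    IsTwistPair u v ↔ u ≤ 1 ∧ v ≤ 1 ∧ IsTwistPair (u ⊔ v) (u ⊔ v) :=
  ⟨fun h => ⟨h.left_le_one, h.right_le_one, h.diag_sup⟩,
    fun ⟨hu, hv, h⟩ => .of_diag_sup hidem hu hv h⟩

lemma injective_inf_one_neg_inf_one :
    Function.Injective fun a : A => (a ⊓ 1, neg a ⊓ 1) := by
  intro a b hab
  obtain ⟨hpos, hneg⟩ := Prod.mk.inj hab
  exact le_antisymm (le_iff_inf_one_le.2 ⟨hpos.le, hneg.ge⟩)
    (le_iff_inf_one_le.2 ⟨hpos.ge, hneg.le⟩)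

end KLattice

/-- For a Nelson paraconsistent lattice `A` (a distributive K-lattice with
idempotent negative cone): (i) `F = {(a ∨ ¬a) ∧ 1 : a ∈ A}` is a lattice
filter of the negative cone `A⁻` containing all dense elements
`u ∨ (u ⇨₁ v)`; and (ii) `a ↦ (a ∧ 1, ¬a ∧ 1)` is a bijection from `A` onto
`K(A⁻, F) = {(u,v) : u ≤ 1, v ≤ 1, u ∨ v ∈ F}`. -/
theorem stmt18 {A : Type*} [KLattice A]
    (hdist : ∀ x y z : A, x ⊓ (y ⊔ z) = (x ⊓ y) ⊔ (x ⊓ z))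
    (hidem : ∀ x : A, (x ⊓ 1) * (x ⊓ 1) = x ⊓ 1) :
    let F : Set A := {y | ∃ a : A, y = (a ⊔ neg a) ⊓ 1}
    let f : A → A × A := fun a => (a ⊓ 1, neg a ⊓ 1)
    -- (i) `F` is a lattice filter of the negative cone `A⁻`:
    (∀ y ∈ F, y ≤ 1) ∧
    F.Nonempty ∧
    (∀ u v : A, u ∈ F → u ≤ v → v ≤ 1 → v ∈ F) ∧
    (∀ u v : A, u ∈ F → v ∈ F → u ⊓ v ∈ F) ∧
    (∀ u v : A, u ≤ 1 → v ≤ 1 → u ⊔ (KLattice.imp u v ⊓ 1) ∈ F) ∧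
    -- (ii) `f` is a bijection from `A` onto `K(A⁻, F)`:
    Function.Injective f ∧
    Set.range f = {p : A × A | p.1 ≤ 1 ∧ p.2 ≤ 1 ∧ p.1 ⊔ p.2 ∈ F} := by
  intro F f
  have mem_F (w : A) : w ∈ F ↔ IsTwistPair w w := exists_eq_sup_neg_inf_one_iff
  have mem_range_f (p : A × A) : p ∈ Set.range f ↔ IsTwistPair p.1 p.2 := by
    simp only [Set.mem_range, f, Prod.ext_iff, IsTwistPair]
  simp only [mem_F]
  refine ⟨fun _ h => h.left_le_one, ⟨1, (mem_F 1).2 (.of_le_one le_rfl)⟩, ?_,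
    fun _ _ => .diag_inf hidem, fun _ _ hu hv => (IsTwistPair.self_coneImp hu hv).diag_sup,
    injective_inf_one_neg_inf_one, ?_⟩
  · intro u v hu huv hv
    exact hu.diag_of_sup_le hv (sup_le huv huv)
  · ext p
    exact (mem_range_f p).trans (isTwistPair_iff hidem)
end
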